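/- Let α ∈ [0,1) and let G be a connected graph with ρ := ρ_α(G) ≥ 2. Let P = (u_1,…,u_{r+1}) be a pendent path in G with root u_1, and let x_1,…,x_{r+1} be the entries of a positive unit eigenvector of A_α(G) with eigenvalue ρ corresponding to u_1,…,u_{r+1}. If γ = (1/2)((ρ−2α)/(1−α) + sqrt(((ρ−2α)/(1−α))² − 4)), then x_i > γ·x_{i+1} for every i = 1,…,r. -/

import Mathlib

/-!
Put `β = (ρ - 2α)/(1 - α) ≥ 2`, so that `γ ≥ 1` and `γ² - βγ + 1 = 0`, i.e. `γ = β - 1/γ`.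
The eigenvalue equation at an internal vertex of the path, whose two neighbours are the previous
and the next vertex, is the recurrence `x_{i-1} = β x_i - x_{i+1}`. At the end vertex, of degree
one, it gives `x_{r-1} = (β + α/(1-α)) x_r ≥ β x_r > γ x_r`. Going from the end vertex towards the
root, `γ x_{i+1} < x_i` implies `x_{i-1} > (β - 1/γ) x_i = γ x_i`.

The eigenvalue equation in terms of neighbour sums is `Aalpha_eigen_apply`; the properties of `γ`
are collected in `gammaOf_spec`.
-/

/-- The spectral radius (largest eigenvalue) of a real symmetric matrix, as the
supremum of its set of real eigenvalues. -/
noncomputable def specRad {n : Type*} [Fintype n] (M : Matrix n n ℝ) : ℝ :=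
  sSup {t : ℝ | ∃ v : n → ℝ, v ≠ 0 ∧ M.mulVec v = t • v}

/-- The matrix `A_α(G) = α·D(G) + (1-α)·A(G)`. -/
noncomputable def Aalpha {V : Type*} [Fintype V] [DecidableEq V]
    (α : ℝ) (G : SimpleGraph V) : Matrix V V ℝ :=
  letI := Classical.decRel G.Adj
  α • Matrix.diagonal (fun v => (G.degree v : ℝ)) + (1 - α) • G.adjMatrix ℝ

/-- The `α`-index `ρ_α(G)`: the spectral radius of `A_α(G)`. -/
noncomputable def rhoAlpha {V : Type*} [Fintype V] [DecidableEq V]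
    (α : ℝ) (G : SimpleGraph V) : ℝ :=
  specRad (Aalpha α G)


/-- `w` is a cut vertex of `G`: `G` is connected but deleting `w` disconnects it. -/
def IsCutVertex {V : Type*} (G : SimpleGraph V) (w : V) : Prop :=
  G.Connected ∧ ¬ (G.induce {x | x ≠ w}).Connected

/-- `(u 0, u 1, …, u r)` is a pendent path of `G` with root `u 0`:
the vertices are distinct, consecutive ones are adjacent, the root is a cut
vertex of `G`, the internal vertices have degree 2 in `G`, and the last vertex
has degree 1 in `G`. -/
def IsPendentPath {V : Type*} [Fintype V] [DecidableEq V]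
    (G : SimpleGraph V) {r : ℕ} (u : Fin (r + 1) → V) : Prop :=
  letI := Classical.decRel G.Adj
  Function.Injective u ∧
  (∀ i : Fin r, G.Adj (u i.castSucc) (u i.succ)) ∧
  (∀ i : Fin (r + 1), 0 < i.val → i.val < r → G.degree (u i) = 2) ∧
  (0 < r → G.degree (u (Fin.last r)) = 1) ∧
  IsCutVertex G (u 0)

/-- `γ`, the larger root of `X² − ((ρ−2α)/(1−α))X + 1 = 0`. -/
noncomputable def gammaOf (α ρ : ℝ) : ℝ :=
  (1 / 2) * ((ρ - 2 * α) / (1 - α) +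
    Real.sqrt (((ρ - 2 * α) / (1 - α)) ^ 2 - 4))

/-- The eigenvalue equation of `A_α(G)` read at the vertex `v`. -/
lemma Aalpha_eigen_apply {V : Type*} [Fintype V] [DecidableEq V] {α ρ : ℝ}
    {G : SimpleGraph V} [DecidableRel G.Adj] {x : V → ℝ}
    (h : (Aalpha α G).mulVec x = ρ • x) (v : V) :
    α * (G.degree v * x v) + (1 - α) * ∑ w ∈ G.neighborFinset v, x w = ρ * x v := by
  have h1 := congrFun h v
  unfold Aalpha at h1
  simp only [Matrix.add_mulVec, Matrix.smul_mulVec, Pi.add_apply, Pi.smul_apply,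
    Matrix.mulVec_diagonal, SimpleGraph.adjMatrix_mulVec_apply, smul_eq_mul] at h1
  convert h1

/-- For `ρ ≥ 2`, `γ` is at least `1` and satisfies its defining quadratic equation with
denominators cleared. -/
lemma gammaOf_spec {α ρ : ℝ} (hα1 : α < 1) (hρ : 2 ≤ ρ) :
    1 ≤ gammaOf α ρ ∧
      (1 - α) * (gammaOf α ρ ^ 2 + 1) = (ρ - 2 * α) * gammaOf α ρ := by
  have ha : 0 < 1 - α := by linarith
  obtain ⟨β, hβ⟩ : ∃ β, β = (ρ - 2 * α) / (1 - α) := ⟨_, rfl⟩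
  have hβ2 : 2 ≤ β := by
    rw [hβ, le_div_iff₀ ha]; linarith
  have hβ' : ρ - 2 * α = β * (1 - α) := by
    rw [hβ]; field_simp
  have hs := Real.sq_sqrt (show 0 ≤ β ^ 2 - 4 by nlinarith)
  have hs0 := Real.sqrt_nonneg (β ^ 2 - 4)
  unfold gammaOf
  rw [← hβ, hβ']
  constructor
  · linarith
  · linear_combination (1 - α) / 4 * hs

/-- Let `α ∈ [0,1)` and `G` a connected graph with
`ρ := ρ_α(G) ≥ 2`. Let `(u 0, …, u r)` be a pendent path in `G` with root `u 0`,
and let `x` be a positive unit eigenvector of `A_α(G)` with eigenvalue `ρ`.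
With `γ = ((ρ−2α)/(1−α) + √(((ρ−2α)/(1−α))² − 4))/2`, we have
`x (u i) > γ · x (u (i+1))` for every `i = 0, …, r−1`. -/
theorem pendentPath_decay (α : ℝ) (hα0 : 0 ≤ α) (hα1 : α < 1)
    {V : Type*} [Fintype V] [DecidableEq V] (G : SimpleGraph V)
    (hconn : G.Connected) (hρ : 2 ≤ rhoAlpha α G)
    {r : ℕ} (u : Fin (r + 1) → V) (hpath : IsPendentPath G u)
    (x : V → ℝ) (hx : ∀ w, 0 < x w) (hunit : ∑ w, x w ^ 2 = 1)
    (heig : (Aalpha α G).mulVec x = rhoAlpha α G • x) :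
    ∀ i : Fin r, gammaOf α (rhoAlpha α G) * x (u i.succ) < x (u i.castSucc) := by
  classical
  obtain ⟨hinj, hadj, hdeg2, hdeg1, -⟩ := hpath
  obtain ⟨hγ1, hγ⟩ := gammaOf_spec hα1 hρ
  have heq := fun v => Aalpha_eigen_apply heig v
  generalize rhoAlpha α G = ρ at *
  generalize gammaOf α ρ = γ at *
  have ha : 0 < 1 - α := by linarith
  have hγ0 : 0 < γ := by linarith
  -- Induction on the distance `k` of `u i.succ` from the end vertex `u r`.
  suffices H : ∀ k : ℕ, ∀ i : Fin r, i.val + k + 1 = r →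
      γ * x (u i.succ) < x (u i.castSucc) from
    fun i => H (r - 1 - i.val) i (by omega)
  intro k
  induction k with
  | zero =>
    intro i hi
    have hlast : i.succ = Fin.last r := Fin.ext (by simp; omega)
    have hd : G.degree (u i.succ) = 1 := by
      rw [hlast]; convert hdeg1 (by omega)
    have hN : G.neighborFinset (u i.succ) = {u i.castSucc} := by
      symm
      apply Finset.eq_of_subset_of_card_le
      · simpa using (hadj i).symm
      · rw [SimpleGraph.card_neighborFinset_eq_degree, hd]; simp
    have h := heq (u i.succ)
    rw [hN, hd, Finset.sum_singleton] at h
    push_cast at h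
    have hX := hx (u i.succ)
    generalize x (u i.succ) = X at *
    generalize x (u i.castSucc) = Y at *
    -- Multiplying by `γ (1 - α)` turns the difference into `(1 - α + α γ) X > 0`.
    have key : (γ * (1 - α)) * (Y - γ * X) = (1 - α + α * γ) * X := by
      linear_combination γ * h - X * hγ
    have hpos : 0 < (1 - α + α * γ) * X := by positivity
    rw [← key] at hpos
    have := pos_of_mul_pos_right hpos (by positivity)
    linarith
  | succ k ih =>
    intro i hi
    obtain ⟨j, hj⟩ : ∃ j : Fin r, j.val = i.val + 1 := ⟨⟨i.val + 1, by omega⟩, rfl⟩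
    have hji : j.castSucc = i.succ := Fin.ext (by simp [hj])
    have hstep := ih j (by omega)
    rw [hji] at hstep
    have hd : G.degree (u i.succ) = 2 := by
      convert hdeg2 i.succ (by simp) (by simp; omega)
    have hne : u i.castSucc ≠ u j.succ := by
      intro h
      have := congrArg Fin.val (hinj h)
      simp at this
      omega
    have hN : G.neighborFinset (u i.succ) = {u i.castSucc, u j.succ} := by
      symm
      apply Finset.eq_of_subset_of_card_le
      · have hj' := hadj j
        rw [hji] at hj'
        intro w hw
        rw [SimpleGraph.mem_neighborFinset]
        rcases Finset.mem_insert.1 hw with rfl | hw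
        · exact (hadj i).symm
        · rw [Finset.mem_singleton.1 hw]; exact hj'
      · rw [SimpleGraph.card_neighborFinset_eq_degree, hd, Finset.card_pair hne]
    have h := heq (u i.succ)
    rw [hN, hd, Finset.sum_pair hne] at h
    push_cast at h
    generalize x (u i.succ) = X at *
    generalize x (u i.castSucc) = Y at *
    generalize x (u j.succ) = Z at *
    have key : (1 - α) * (γ * (Y - γ * X)) = (1 - α) * (X - γ * Z) := by
      linear_combination γ * h - X * hγ
    have key' := mul_left_cancel₀ ha.ne' key
    have hpos : 0 < γ * (Y - γ * X) := by rw [key']; linarith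
    have := pos_of_mul_pos_right hpos hγ0.le
    linarith
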